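/- For every integer n ≥ 3 and every pair of adjacent vertices x, y of the n-dimensional varietal hypercube VQ_n, there exists an xy-path of every length ℓ with 1 ≤ ℓ ≤ 2^n − 1 and ℓ ∉ {2, 4}. -/

import Mathlib

/-- The relation `I = {(00,00),(01,01),(10,11),(11,10)}` on pairs of bits,
where a pair `(a, b)` records two consecutive bits (higher bit first). -/
def vqCross (p q : Bool × Bool) : Prop :=
  (p = (false, false) ∧ q = (false, false)) ∨
  (p = (false, true) ∧ q = (false, true)) ∨
  (p = (true, false) ∧ q = (true, true)) ∨
  (p = (true, true) ∧ q = (true, false))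

/-- Adjacency in the varietal hypercube `VQ n`.  A vertex is a function
`Fin n → Bool`, the bit `x_k` (1-indexed, `x = x_n x_{n-1} ⋯ x_1`) being
the value at index `k - 1`; the leading bit `x_n` is at index `n - 1`. -/
def vqAdj : (n : ℕ) → (Fin n → Bool) → (Fin n → Bool) → Prop
  | 0, _, _ => False
  | 1, x, y => x ≠ y
  | (n + 2), x, y =>
    if x (Fin.last (n + 1)) = y (Fin.last (n + 1)) then
      -- both in the same copy of `VQ (n+1)`
      vqAdj (n + 1) (fun i => x i.castSucc) (fun i => y i.castSucc)
    else
      if 3 ∣ (n + 2) then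
        (∀ i : Fin (n + 2), i.val < n - 1 → x i = y i) ∧
        vqCross (x ⟨n, by omega⟩, x ⟨n - 1, by omega⟩)
          (y ⟨n, by omega⟩, y ⟨n - 1, by omega⟩)
      else
        ∀ i : Fin (n + 1), x i.castSucc = y i.castSucc

/-- The `n`-dimensional varietal hypercube `VQ_n`. -/
def varietalCube (n : ℕ) : SimpleGraph (Fin n → Bool) :=
  SimpleGraph.fromRel (vqAdj n)

/-- There is a path of length `k` from `x` to `y` in `G`. -/
def HasPath {V : Type*} (G : SimpleGraph V) (x y : V) (k : ℕ) : Prop :=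
  ∃ p : G.Walk x y, p.IsPath ∧ p.length = k

namespace HasPath

variable {V W : Type*} {G : SimpleGraph V} {H : SimpleGraph W}

theorem of_adj {x y : V} (h : G.Adj x y) : HasPath G x y 1 :=
  ⟨h.toWalk, by simp [SimpleGraph.Walk.isPath_def, h.ne], by simp⟩

theorem map (e : G →g H) (he : Function.Injective e) {x y : V} {k : ℕ}
    (h : HasPath G x y k) : HasPath H (e x) (e y) k := by
  obtain ⟨p, hp, rfl⟩ := h
  exact ⟨p.map e, hp.map he, by simp⟩

/-- A path in one copy of `G`, a cross edge and a path in a disjoint copy of `G` form a path. -/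
theorem cross (e e' : G →g H) (he : Function.Injective e) (he' : Function.Injective e')
    (hd : ∀ u v, e u ≠ e' v) {u v w t : V} {a b : ℕ} (h : H.Adj (e v) (e' w))
    (h₁ : HasPath G u v a) (h₂ : HasPath G w t b) :
    HasPath H (e u) (e' t) (a + b + 1) := by
  obtain ⟨p, hp, rfl⟩ := h₁
  obtain ⟨q, hq, rfl⟩ := h₂
  refine ⟨(p.map e).append (.cons h (q.map e')), ?_, by simp; omega⟩
  have hp' := (hp.map he).support_nodup
  have hq' := (hq.map he').support_nodup
  rw [SimpleGraph.Walk.isPath_def, SimpleGraph.Walk.support_append]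
  simp only [SimpleGraph.Walk.support_cons, List.tail_cons]
  refine List.Nodup.append hp' hq' ?_
  intro z hz hz'
  simp only [SimpleGraph.Walk.support_map, List.mem_map] at hz hz'
  obtain ⟨z₁, -, rfl⟩ := hz
  obtain ⟨z₂, -, h₂⟩ := hz'
  exact hd _ _ h₂.symm

/-- An edge of a path can be replaced by a detour through a disjoint copy of `G`. -/
theorem replace_edge (e e' : G →g H) (he : Function.Injective e) (he' : Function.Injective e')
    (hd : ∀ u v, e u ≠ e' v) {x u v y u' v' : V} {b : ℕ} (p : G.Walk x u) (q : G.Walk v y)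
    (hpq : (p.support ++ q.support).Nodup)
    (hu : H.Adj (e u) (e' u')) (hv : H.Adj (e v) (e' v')) (h : HasPath G u' v' b) :
    HasPath H (e x) (e y) (p.length + q.length + b + 2) := by
  obtain ⟨r, hr, rfl⟩ := h
  refine ⟨(p.map e).append (.cons hu ((r.map e').append (.cons hv.symm (q.map e)))), ?_,
    by simp; omega⟩
  have hr' := (hr.map he').support_nodup
  have hpq' := hpq.map he
  simp only [SimpleGraph.Walk.isPath_def, SimpleGraph.Walk.support_append,
    SimpleGraph.Walk.support_cons, List.tail_cons, SimpleGraph.Walk.support_map,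
    List.map_append, List.nodup_append, List.mem_append, List.mem_map] at hr' hpq' ⊢
  refine ⟨hpq'.1, ⟨hr', hpq'.2.1, ?_⟩, ?_⟩
  · rintro _ ⟨a, -, rfl⟩ _ ⟨c, -, rfl⟩
    exact (hd _ _).symm
  · rintro _ ⟨a, ha, rfl⟩ z (⟨c, -, rfl⟩ | ⟨c, hc, rfl⟩)
    · exact hd _ _
    · exact hpq'.2.2 _ ⟨a, ha, rfl⟩ _ ⟨c, hc, rfl⟩

/-- A path of length at least two can be lengthened by a detour through a disjoint copy of `G`,
provided that among any two consecutive edges one is mapped to an edge by the matching `f`. -/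
theorem detour (e e' : G →g H) (he : Function.Injective e) (he' : Function.Injective e')
    (hd : ∀ u v, e u ≠ e' v) (f : V → V) (hf : ∀ u, H.Adj (e u) (e' (f u)))
    (hgood : ∀ u v w, G.Adj u v → G.Adj v w → u ≠ w →
      G.Adj (f u) (f v) ∨ G.Adj (f v) (f w))
    {x y : V} {a b : ℕ} (ha : 2 ≤ a) (h₁ : HasPath G x y a)
    (h₂ : ∀ u v, G.Adj u v → HasPath G u v b) :
    HasPath H (e x) (e y) (a + b + 1) := by
  obtain ⟨p, hp, rfl⟩ := h₁
  match p, hp, ha with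
  | .cons (v := v) h (.cons (v := w) h' p), hp, _ =>
    have hnd := hp.support_nodup
    have hxw : x ≠ w := by
      rintro rfl
      simp at hnd
    rcases hgood x v w h h' hxw with hg | hg
    · have := replace_edge e e' he he' hd (.nil : G.Walk x x) (.cons h' p) (by simpa using hnd)
        (hf x) (hf v) (h₂ _ _ hg)
      convert this using 1
      simp
      omega
    · have := replace_edge e e' he he' hd (.cons h .nil : G.Walk x v) p (by simpa using hnd)
        (hf v) (hf w) (h₂ _ _ hg)
      convert this using 1
      simp
      omega

end HasPath

theorem vqAdj_irrefl : ∀ (n : ℕ) (x : Fin n → Bool), ¬ vqAdj n x x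
  | 0, _ => by simp [vqAdj]
  | 1, _ => by simp [vqAdj]
  | n + 2, x => by simpa [vqAdj] using vqAdj_irrefl (n + 1) _

theorem vqCross_symm {p q : Bool × Bool} (h : vqCross p q) : vqCross q p := by
  unfold vqCross at *
  tauto

theorem vqAdj_symm : ∀ (n : ℕ) (x y : Fin n → Bool), vqAdj n x y → vqAdj n y x
  | 0, _, _ => by simp [vqAdj]
  | 1, _, _ => by simp only [vqAdj]; exact Ne.symm
  | n + 2, x, y => by
    simp only [vqAdj, eq_comm (a := y (Fin.last (n + 1)))]
    split_ifs
    · exact vqAdj_symm (n + 1) _ _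
    · exact fun h => ⟨fun i hi => (h.1 i hi).symm, vqCross_symm h.2⟩
    · exact fun h i => (h i).symm

theorem varietalCube_adj {n : ℕ} {x y : Fin n → Bool} :
    (varietalCube n).Adj x y ↔ vqAdj n x y := by
  simp only [varietalCube, SimpleGraph.fromRel_adj]
  constructor
  · rintro ⟨-, h | h⟩
    exacts [h, vqAdj_symm _ _ _ h]
  · exact fun h => ⟨fun hxy => vqAdj_irrefl n y (hxy ▸ h), Or.inl h⟩

/-- The matching between the two copies of `VQ (n + 1)` in `VQ (n + 2)`. -/
def twist (n : ℕ) (u : Fin (n + 1) → Bool) : Fin (n + 1) → Bool := fun i =>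
  if 3 ∣ n + 2 ∧ i.val + 1 = n ∧ u (Fin.last n) = true then !u i else u i

theorem twist_twist (n : ℕ) (u : Fin (n + 1) → Bool) : twist n (twist n u) = u := by
  funext i
  have h : twist n u (Fin.last n) = u (Fin.last n) := by simp [twist]
  unfold twist at h ⊢
  rw [h]
  split_ifs <;> simp

theorem twist_of_not_dvd {n : ℕ} (h : ¬ 3 ∣ n + 2) (u : Fin (n + 1) → Bool) : twist n u = u := by
  funext i
  simp [twist, h]

theorem vqCross_iff (a b c d : Bool) :
    vqCross (a, b) (c, d) ↔ c = a ∧ d = if a then !b else b := by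
  unfold vqCross
  revert a b c d
  decide

theorem varietalCube_adj_succ {n : ℕ} {x y : Fin (n + 2) → Bool} :
    (varietalCube (n + 2)).Adj x y ↔
      (x (Fin.last _) = y (Fin.last _) ∧ (varietalCube (n + 1)).Adj (Fin.init x) (Fin.init y)) ∨
      (x (Fin.last _) ≠ y (Fin.last _) ∧ Fin.init y = twist n (Fin.init x)) := by
  simp only [varietalCube_adj]
  rw [vqAdj]
  split_ifs with h1 h2
  · simp only [h1, true_and, ne_eq, not_true_eq_false, false_and, or_false]
    rfl
  · simp only [h1, false_and, false_or, ne_eq, not_false_eq_true, true_and, vqCross_iff]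
    have hn : 1 ≤ n := by omega
    constructor
    · rintro ⟨h, h3, h4⟩
      funext i
      simp only [twist, h2, true_and, Fin.init]
      have hl : (Fin.last n).castSucc = (⟨n, by omega⟩ : Fin (n + 2)) := rfl
      rw [hl]
      rcases lt_trichotomy (i.val + 1) n with hi | hi | hi
      · rw [if_neg (by omega)]
        exact (h i.castSucc (by simp; omega)).symm
      · have : i.castSucc = (⟨n - 1, by omega⟩ : Fin (n + 2)) := by ext; simp; omega
        rw [this, h4]
        simp [hi]
      · have : i.castSucc = (⟨n, by omega⟩ : Fin (n + 2)) := by ext; simp; omega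
        rw [this, h3, if_neg (by omega)]
    · intro h
      have key : ∀ i : Fin (n + 1), y i.castSucc = twist n (Fin.init x) i := fun i => congrFun h i
      refine ⟨fun i hi => ?_, ?_, ?_⟩
      · have := key ⟨i, by omega⟩
        rw [twist, if_neg (by simp; omega)] at this
        exact this.symm
      · have := key ⟨n, by omega⟩
        rw [twist, if_neg (by simp)] at this
        exact this
      · have := key ⟨n - 1, by omega⟩
        have hi : n - 1 + 1 = n := by omega
        simp only [twist, h2, true_and, hi] at this
        exact this
  · simp only [h1, false_and, false_or, ne_eq, not_false_eq_true, true_and, twist_of_not_dvd h2]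
    exact ⟨fun h => funext fun i => (h i).symm, fun h i => (congrFun h i).symm⟩

/-- The embedding of `VQ (n + 1)` onto the copy with leading bit `b` in `VQ (n + 2)`. -/
def copyHom (n : ℕ) (b : Bool) : varietalCube (n + 1) →g varietalCube (n + 2) where
  toFun u := Fin.snoc (α := fun _ => Bool) u b
  map_rel' h := by
    rw [varietalCube_adj_succ]
    simpa using h

theorem copyHom_apply (n : ℕ) (b : Bool) (u : Fin (n + 1) → Bool) :
    copyHom n b u = Fin.snoc (α := fun _ => Bool) u b := rfl

theorem copyHom_injective (n : ℕ) (b : Bool) : Function.Injective (copyHom n b) := fun u v h => by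
  simpa [copyHom_apply] using congrArg (Fin.init (α := fun _ => Bool)) h

theorem copyHom_ne {n : ℕ} {b c : Bool} (h : b ≠ c) (u v : Fin (n + 1) → Bool) :
    copyHom n b u ≠ copyHom n c v := fun huv => h (by
  simpa [copyHom_apply] using congrFun huv (Fin.last _))

theorem copyHom_adj_twist {n : ℕ} {b c : Bool} (h : b ≠ c) (u : Fin (n + 1) → Bool) :
    (varietalCube (n + 2)).Adj (copyHom n b u) (copyHom n c (twist n u)) := by
  rw [varietalCube_adj_succ]
  simp [copyHom_apply, h]

/-- An edge not in the leading direction is preserved by the matching. -/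
theorem twist_adj_of_last_eq {n : ℕ} (hn : 2 ≤ n) {u v : Fin (n + 1) → Bool}
    (h : (varietalCube (n + 1)).Adj u v) (hl : u (Fin.last n) = v (Fin.last n)) :
    (varietalCube (n + 1)).Adj (twist n u) (twist n v) := by
  by_cases h3 : 3 ∣ n + 2
  swap
  · simpa only [twist_of_not_dvd h3] using h
  obtain ⟨k, rfl⟩ : ∃ k, n = k + 2 := ⟨n - 2, by omega⟩
  have hlast : ∀ w, twist (k + 2) w (Fin.last _) = w (Fin.last _) := fun w => by simp [twist]
  have hprev : ∀ w : Fin (k + 3) → Bool, Fin.init (twist (k + 2) w) (Fin.last _) =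
      (Fin.init w (Fin.last _) ^^ w (Fin.last _)) := fun w => by
    simp only [Fin.init, twist, h3, Fin.val_castSucc, Fin.val_last, true_and]
    cases w (Fin.last _) <;> simp
  have hinit : ∀ w : Fin (k + 3) → Bool,
      Fin.init (Fin.init (twist (k + 2) w)) = Fin.init (Fin.init w) := fun w => by
    funext i
    simp only [Fin.init, twist, Fin.val_castSucc]
    rw [if_neg (by omega)]
  have hk : ¬ 3 ∣ k + 2 := by omega
  rw [varietalCube_adj_succ] at h ⊢
  simp only [hl, ne_eq, not_true_eq_false, false_and, or_false, true_and, hlast] at h ⊢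
  rw [varietalCube_adj_succ] at h ⊢
  simpa only [hprev, hinit, hl, twist_of_not_dvd hk, ne_eq, Bool.xor_left_inj] using h

theorem twist_adj_or {n : ℕ} (hn : 2 ≤ n) (u v w : Fin (n + 1) → Bool)
    (huv : (varietalCube (n + 1)).Adj u v) (hvw : (varietalCube (n + 1)).Adj v w) (huw : u ≠ w) :
    (varietalCube (n + 1)).Adj (twist n u) (twist n v) ∨
      (varietalCube (n + 1)).Adj (twist n v) (twist n w) := by
  by_cases h1 : u (Fin.last n) = v (Fin.last n)
  · exact Or.inl (twist_adj_of_last_eq hn huv h1)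
  by_cases h2 : v (Fin.last n) = w (Fin.last n)
  · exact Or.inr (twist_adj_of_last_eq hn hvw h2)
  exfalso
  obtain ⟨k, rfl⟩ : ∃ k, n = k + 1 := ⟨n - 1, by omega⟩
  rw [varietalCube_adj_succ] at huv hvw
  simp only [h1, h2, false_and, false_or, ne_eq, not_false_eq_true, true_and] at huv hvw
  rw [huv, twist_twist] at hvw
  apply huw
  rw [← Fin.snoc_init_self u, ← Fin.snoc_init_self w, hvw]
  congr 1
  revert h1 h2
  cases u (Fin.last (k + 1)) <;> cases v (Fin.last (k + 1)) <;> cases w (Fin.last (k + 1)) <;> simp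

/-- Replace the three lowest bits of `u` by `t`. -/
def replaceLow {n : ℕ} (u : Fin n → Bool) (t : Fin 3 → Bool) : Fin n → Bool := fun i =>
  if h : i.val < 3 then t ⟨i, h⟩ else u i

theorem replaceLow_adj {n : ℕ} (hn : 3 ≤ n) (u : Fin n → Bool) {t s : Fin 3 → Bool}
    (h : (varietalCube 3).Adj t s) :
    (varietalCube n).Adj (replaceLow u t) (replaceLow u s) := by
  induction n, hn using Nat.le_induction with
  | base =>
    have : ∀ t, replaceLow u t = t := fun t => by
      funext i
      simp [replaceLow]
    rwa [this, this]
  | succ n hn ih =>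
    obtain ⟨k, rfl⟩ : ∃ k, n = k + 1 := ⟨n - 1, by omega⟩
    rw [varietalCube_adj_succ]
    refine Or.inl ⟨?_, ih (Fin.init u)⟩
    simp only [replaceLow, Fin.val_last]
    rw [dif_neg (by omega), dif_neg (by omega)]

theorem replaceLow_injective {n : ℕ} (hn : 3 ≤ n) (u : Fin n → Bool) :
    Function.Injective (replaceLow u) := fun t s h => by
  funext i
  simpa [replaceLow] using congrFun h ⟨i, by omega⟩

theorem replaceLow_self {n : ℕ} (hn : 3 ≤ n) (u : Fin n → Bool) :
    replaceLow u (fun i => u ⟨i, by omega⟩) = u := by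
  funext i
  simp [replaceLow]

theorem twist_replaceLow {n : ℕ} (hn : 2 ≤ n) (u : Fin (n + 1) → Bool) (t : Fin 3 → Bool) :
    twist n (replaceLow u t) = replaceLow (twist n u) t := by
  by_cases h3 : 3 ∣ n + 2
  · funext i
    have hl : replaceLow u t (Fin.last n) = u (Fin.last n) := by
      simp only [replaceLow, Fin.val_last]
      rw [dif_neg (by omega)]
    simp only [twist, hl]
    by_cases hi : i.val < 3
    · rw [if_neg (by omega)]
      simp [replaceLow, hi]
    · simp [replaceLow, hi, twist]
  · simp only [twist_of_not_dvd h3]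

/-- The embedding of `VQ 3` into `VQ n` through `u`. -/
def lowHom {n : ℕ} (hn : 3 ≤ n) (u : Fin n → Bool) : varietalCube 3 →g varietalCube n where
  toFun := replaceLow u
  map_rel' h := replaceLow_adj hn u h

/-- Adjacency of `VQ 3` on explicit triples of bits, highest bit first. -/
def adjThree (x y : Bool × Bool × Bool) : Bool :=
  if x.1 = y.1 then (x.2.1 ^^ y.2.1) ^^ (x.2.2 ^^ y.2.2)
  else x.2.1 == y.2.1 && y.2.2 == (x.2.2 ^^ x.2.1)

/-- The vertex of `VQ 3` given by a triple of bits, highest bit first. -/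
def bitsThree (x : Bool × Bool × Bool) : Fin 3 → Bool := ![x.2.2, x.2.1, x.1]

theorem bitsThree_surjective : Function.Surjective bitsThree := fun x =>
  ⟨(x 2, x 1, x 0), by funext i; fin_cases i <;> rfl⟩

theorem bitsThree_injective : Function.Injective bitsThree := fun _ _ h =>
  Prod.ext (congrFun h 2) (Prod.ext (congrFun h 1) (congrFun h 0))

theorem bitsThree_adj (x y : Bool × Bool × Bool) :
    (varietalCube 3).Adj (bitsThree x) (bitsThree y) ↔ adjThree x y = true := by
  obtain ⟨a, b, c⟩ := x
  obtain ⟨a', b', c'⟩ := y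
  simp only [varietalCube_adj, vqAdj, bitsThree, vqCross_iff, Fin.forall_fin_succ]
  revert a b c a' b' c'
  decide

/-- Search for a path of a given length from `x` to `y` that avoids the vertices in `l`. -/
def searchPath {α : Type*} [DecidableEq α] (adj : α → α → Bool) (verts : List α) :
    ℕ → List α → α → α → Bool
  | 0, _, x, y => decide (x = y)
  | k + 1, l, x, y => verts.any fun z =>
      adj x z && !(decide (z ∈ x :: l)) && searchPath adj verts k (x :: l) z y

theorem exists_path_of_searchPath {α V : Type*} [DecidableEq α] {G : SimpleGraph V} (e : α → V)
    (he : Function.Injective e)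
    {adj : α → α → Bool} (hadj : ∀ x y, adj x y = true → G.Adj (e x) (e y)) (verts : List α)
    (k : ℕ) (l : List α) (x y : α) (hx : x ∉ l) (h : searchPath adj verts k l x y = true) :
    ∃ p : G.Walk (e x) (e y), p.IsPath ∧ p.length = k ∧ ∀ z ∈ l, e z ∉ p.support := by
  induction k generalizing l x with
  | zero =>
    obtain rfl : x = y := by simpa [searchPath] using h
    refine ⟨.nil, by simp, rfl, fun z hz => ?_⟩
    simp only [SimpleGraph.Walk.support_nil, List.mem_singleton]
    exact fun hzx => hx (he hzx ▸ hz)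
  | succ k ih =>
    simp only [searchPath, List.any_eq_true, Bool.and_eq_true, Bool.not_eq_true',
      decide_eq_false_iff_not] at h
    obtain ⟨z, -, ⟨hxz, hz⟩, hs⟩ := h
    obtain ⟨p, hp, hpl, hpa⟩ := ih (x :: l) z hz hs
    refine ⟨.cons (hadj _ _ hxz) p, hp.cons (hpa x (by simp)), by simp [hpl], fun w hw => ?_⟩
    simp only [SimpleGraph.Walk.support_cons, List.mem_cons, not_or]
    exact ⟨fun hwx => hx (he hwx ▸ hw), hpa w (by simp [hw])⟩

/-- The vertices of `VQ 3` as triples. -/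
def triples : List (Bool × Bool × Bool) :=
  [(false, false, false), (false, false, true), (false, true, false), (false, true, true),
    (true, false, false), (true, false, true), (true, true, false), (true, true, true)]

theorem hasPath_three_of_searchPath {k : ℕ} {x y : Bool × Bool × Bool}
    (h : searchPath adjThree triples k [] x y = true) :
    HasPath (varietalCube 3) (bitsThree x) (bitsThree y) k := by
  obtain ⟨p, hp, hpl, -⟩ := exists_path_of_searchPath bitsThree bitsThree_injective
    (fun x y => (bitsThree_adj x y).2) triples k [] x y (by simp) h
  exact ⟨p, hp, hpl⟩

theorem searchPath_adjThree : ∀ a b c a' b' c' : Bool,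
    adjThree (a, b, c) (a', b', c') = true → ∀ k ∈ [1, 3, 5, 6, 7],
      searchPath adjThree triples k [] (a, b, c) (a', b', c') = true := by
  decide +kernel

theorem searchPath_five_cycle : ∀ a b c : Bool,
    ∃ y ∈ triples, searchPath adjThree triples 2 [] (a, b, c) y = true ∧
      searchPath adjThree triples 3 [] y (a, b, c) = true := by
  decide +kernel

theorem hasPath_three {x y : Fin 3 → Bool} (h : (varietalCube 3).Adj x y) {k : ℕ}
    (hk : 1 ≤ k) (hk' : k ≤ 7) (h2 : k ≠ 2) (h4 : k ≠ 4) : HasPath (varietalCube 3) x y k := by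
  obtain ⟨⟨a, b, c⟩, rfl⟩ := bitsThree_surjective x
  obtain ⟨⟨a', b', c'⟩, rfl⟩ := bitsThree_surjective y
  refine hasPath_three_of_searchPath
    (searchPath_adjThree _ _ _ _ _ _ ((bitsThree_adj _ _).1 h) k ?_)
  simp only [List.mem_cons, List.not_mem_nil, or_false]
  omega

theorem exists_five_cycle_three (x : Fin 3 → Bool) :
    ∃ y, HasPath (varietalCube 3) x y 2 ∧ HasPath (varietalCube 3) y x 3 := by
  obtain ⟨⟨a, b, c⟩, rfl⟩ := bitsThree_surjective x
  obtain ⟨y, -, h, h'⟩ := searchPath_five_cycle a b c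
  exact ⟨bitsThree y, hasPath_three_of_searchPath h, hasPath_three_of_searchPath h'⟩

theorem exists_adj_three (x : Fin 3 → Bool) : ∃ y, (varietalCube 3).Adj x y := by
  obtain ⟨⟨a, b, c⟩, rfl⟩ := bitsThree_surjective x
  exact ⟨bitsThree (a, b, !c), (bitsThree_adj _ _).2 (by simp [adjThree])⟩

theorem exists_twist_five_cycle {n : ℕ} (hn : 2 ≤ n) (u : Fin (n + 1) → Bool) :
    ∃ v, HasPath (varietalCube (n + 1)) u v 2 ∧
      HasPath (varietalCube (n + 1)) (twist n v) (twist n u) 3 := by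
  have hn' : 3 ≤ n + 1 := by omega
  obtain ⟨s, h, h'⟩ := exists_five_cycle_three fun i => u ⟨i, by omega⟩
  refine ⟨replaceLow u s, ?_, ?_⟩
  · have := h.map (lowHom hn' u) (replaceLow_injective hn' u)
    simpa only [lowHom, RelHom.coeFn_mk, replaceLow_self hn' u] using this
  · have := h'.map (lowHom hn' (twist n u)) (replaceLow_injective hn' _)
    simpa only [lowHom, RelHom.coeFn_mk, ← twist_replaceLow hn, replaceLow_self hn' u] using this

theorem exists_adj_twist_adj {n : ℕ} (hn : 2 ≤ n) (u : Fin (n + 1) → Bool) :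
    ∃ v, (varietalCube (n + 1)).Adj u v ∧ (varietalCube (n + 1)).Adj (twist n v) (twist n u) := by
  have hn' : 3 ≤ n + 1 := by omega
  obtain ⟨s, h⟩ := exists_adj_three fun i => u ⟨i, by omega⟩
  refine ⟨replaceLow u s, ?_, ?_⟩
  · have := replaceLow_adj hn' u h
    rwa [replaceLow_self hn' u] at this
  · have := replaceLow_adj hn' (twist n u) h.symm
    rwa [← twist_replaceLow hn, ← twist_replaceLow hn, replaceLow_self hn' u] at this

theorem hasPath_succ {n : ℕ} (hn : 2 ≤ n)
    (ih : ∀ u v, (varietalCube (n + 1)).Adj u v → ∀ k, 1 ≤ k → k ≤ 2 ^ (n + 1) - 1 → k ≠ 2 →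
      k ≠ 4 → HasPath (varietalCube (n + 1)) u v k)
    {x y : Fin (n + 2) → Bool} (h : (varietalCube (n + 2)).Adj x y) {k : ℕ}
    (hk : 1 ≤ k) (hk' : k ≤ 2 ^ (n + 2) - 1) (h2 : k ≠ 2) (h4 : k ≠ 4) :
    HasPath (varietalCube (n + 2)) x y k := by
  have hN : 8 ≤ 2 ^ (n + 1) := Nat.pow_le_pow_right (n := 2) (by norm_num) (show 3 ≤ n + 1 by omega)
  rw [pow_succ 2 (n + 1)] at hk'
  have hsplit : ∀ z : Fin (n + 2) → Bool, z = copyHom n (z (Fin.last _)) (Fin.init z) :=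
    fun z => (Fin.snoc_init_self z).symm
  by_cases hk1 : k = 1
  · exact hk1 ▸ HasPath.of_adj h
  rw [hsplit x, hsplit y]
  rcases varietalCube_adj_succ.1 h with ⟨hl, hxy⟩ | ⟨hl, hxy⟩
  · rw [← hl]
    generalize x (Fin.last _) = b
    by_cases hkN : k ≤ 2 ^ (n + 1) - 1
    · exact (ih _ _ hxy k hk hkN h2 h4).map (copyHom n b) (copyHom_injective n b)
    have key : ∀ c d, 5 ≤ c → c ≤ 2 ^ (n + 1) - 1 → 1 ≤ d → d ≤ 2 ^ (n + 1) - 1 → d ≠ 2 → d ≠ 4 →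
        HasPath (varietalCube (n + 2)) (copyHom n b (Fin.init x)) (copyHom n b (Fin.init y))
          (c + d + 1) := fun c d hc hc' hd hd' hd2 hd4 =>
      HasPath.detour (copyHom n b) (copyHom n !b) (copyHom_injective _ _) (copyHom_injective _ _)
        (copyHom_ne (by simp)) (twist n) (copyHom_adj_twist (by simp)) (twist_adj_or hn) (by omega)
        (ih _ _ hxy c (by omega) hc' (by omega) (by omega))
        fun u v huv => ih u v huv d hd hd' hd2 hd4
    obtain ⟨m, rfl⟩ : ∃ m, k = 2 ^ (n + 1) + m := ⟨k - 2 ^ (n + 1), by omega⟩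
    by_cases hm : m = 0 ∨ m = 2 ∨ m = 4
    · convert key (2 ^ (n + 1) - 2) (m + 1) (by omega) (by omega) (by omega) (by omega) (by omega)
        (by omega) using 1
      omega
    · convert key (2 ^ (n + 1) - 1) m (by omega) (by omega) (by omega) (by omega) (by omega)
        (by omega) using 1
      omega
  · rw [hxy]
    generalize x (Fin.last _) = b, y (Fin.last _) = c at hl
    generalize Fin.init x = u
    have hcross : ∀ v a d, HasPath (varietalCube (n + 1)) u v a →
        HasPath (varietalCube (n + 1)) (twist n v) (twist n u) d →
        HasPath (varietalCube (n + 2)) (copyHom n b u) (copyHom n c (twist n u)) (a + d + 1) :=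
      fun v a d => HasPath.cross (copyHom n b) (copyHom n c) (copyHom_injective _ _)
        (copyHom_injective _ _) (copyHom_ne hl) (copyHom_adj_twist hl v)
    by_cases hk6 : k = 6
    · obtain ⟨v, h, h'⟩ := exists_twist_five_cycle hn u
      exact hk6 ▸ hcross v 2 3 h h'
    obtain ⟨v, hv, hv'⟩ := exists_adj_twist_adj hn u
    have key : ∀ a d, 1 ≤ a → a ≤ 2 ^ (n + 1) - 1 → a ≠ 2 → a ≠ 4 → 1 ≤ d →
        d ≤ 2 ^ (n + 1) - 1 → d ≠ 2 → d ≠ 4 →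
        HasPath (varietalCube (n + 2)) (copyHom n b u) (copyHom n c (twist n u)) (a + d + 1) :=
      fun a d ha ha' ha2 ha4 hd hd' hd2 hd4 =>
        hcross v a d (ih _ _ hv a ha ha' ha2 ha4) (ih _ _ hv' d hd hd' hd2 hd4)
    by_cases hkN : k ≤ 2 ^ (n + 1) + 1
    · convert key 1 (k - 2) (by omega) (by omega) (by omega) (by omega) (by omega)
        (by omega) (by omega) (by omega) using 1
      omega
    obtain ⟨m, rfl⟩ : ∃ m, k = 2 ^ (n + 1) + m := ⟨k - 2 ^ (n + 1), by omega⟩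
    by_cases hm : m = 2 ∨ m = 4
    · convert key (2 ^ (n + 1) - 2) (m + 1) (by omega) (by omega) (by omega) (by omega) (by omega)
        (by omega) (by omega) (by omega) using 1
      omega
    · convert key (2 ^ (n + 1) - 1) m (by omega) (by omega) (by omega) (by omega) (by omega)
        (by omega) (by omega) (by omega) using 1
      omega

/-- For `n ≥ 3` and adjacent vertices `x, y` of `VQ_n`, there is an `xy`-path of
every length `ℓ` with `1 ≤ ℓ ≤ 2^n - 1` and `ℓ ∉ {2, 4}`. -/
theorem stmt2 (n : ℕ) (hn : 3 ≤ n) (x y : Fin n → Bool)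
    (hadj : (varietalCube n).Adj x y) (ℓ : ℕ)
    (hl : 1 ≤ ℓ) (hu : ℓ ≤ 2 ^ n - 1) (h2 : ℓ ≠ 2) (h4 : ℓ ≠ 4) :
    ∃ p : (varietalCube n).Walk x y, p.IsPath ∧ p.length = ℓ := by
  induction n, hn using Nat.le_induction generalizing ℓ with
  | base => exact hasPath_three hadj hl (by simpa using hu) h2 h4
  | succ n hn ih =>
    obtain ⟨k, rfl⟩ : ∃ k, n = k + 1 := ⟨n - 1, by omega⟩
    exact hasPath_succ (by omega) (fun u v huv j => ih u v huv j) hadj hl hu h2 h4
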